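/- Under the construction setup with assumptions (I)–(VI): the increase of the mean opinion satisfies (∫_{A_y} y dμ)/μ(A_y) − (∫_{A_x} x dμ)/μ(A_x) ≤ 4 μ(B_x)/μ(A), where A_y = y⁻¹([0, 2ε]). -/

import Mathlib

open MeasureTheory Set

/-- The neighbourhood set `N_x(α) = {β ∈ [0,1] : |x(β) − x(α)| ≤ 1}`. -/
def hkNbhd (x : ℝ → ℝ) (α : ℝ) : Set ℝ :=
  {β | β ∈ Icc (0:ℝ) 1 ∧ |x β - x α| ≤ 1}

/-- The continuous-agent Hegselmann–Krause update
`Tx(α) = (∫_{N_x(α)} x dμ) / μ(N_x(α))`. -/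
noncomputable def hkT (x : ℝ → ℝ) : ℝ → ℝ :=
  fun α => (∫ β in hkNbhd x α, x β) / (volume (hkNbhd x α)).toReal

/-- A function `x : [0,1] → ℝ` is regular if it is continuous, nondecreasing,
differentiable outside a set of measure zero, and there are constants
`0 < m ≤ M` with `m ≤ x′ ≤ M` wherever the derivative exists. -/
def Regular (x : ℝ → ℝ) : Prop :=
  ContinuousOn x (Icc 0 1) ∧ MonotoneOn x (Icc 0 1) ∧
  ∃ m M : ℝ, 0 < m ∧ m ≤ M ∧
    (∀ᵐ α ∂(volume.restrict (Icc (0:ℝ) 1)), DifferentiableAt ℝ x α) ∧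
    ∀ α ∈ Icc (0:ℝ) 1, DifferentiableAt ℝ x α → m ≤ deriv x α ∧ deriv x α ≤ M

/-!
Only the distribution `ν` of the opinions matters: `Tx = F ∘ x`, where `F t` is the mean of `ν` over
`[t - 1, t + 1]`, so the claim becomes one about `ν` and `F` on `[0, ∞)`. Put `δ = 2ε`.

If `F t ≤ δ` then `t ≤ 1 + δ`, as `F` moves a.e. opinion by at most `1`. Both the window of an
opinion in `[0, δ]` and the set `{F ≤ δ}` are therefore contained in `[0, δ]` up to a part of
`(δ, 1 + δ]`. Enlarging a set of mass `p` by a set of mass `q` on which a function is at most `M`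
raises its mean by at most `M q / p`. Applied to the windows this bounds `F` on `[0, δ]` by a
constant `K`, and applied to `{F ≤ δ}` it bounds the mean of `F` there, provided
`[0, δ] ⊆ {F ≤ δ}`. That inclusion can fail only if `K > δ`, and then the trivial bound by `δ` is
good enough.
-/

/-- The distribution of opinions of a profile `x` on `[0,1]`: the image of Lebesgue measure
under `x`. It is the zero measure if `x` is not a.e. measurable on `[0,1]`. -/
noncomputable def opinionLaw (x : ℝ → ℝ) : Measure ℝ :=
  (volume.restrict (Icc 0 1)).map x

/-- The mean of `ν` over the closed ball of radius `r` about `t`: the opinion to which an agent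
holding `t` moves when opinions are distributed as `ν` and the confidence radius is `r`. -/
noncomputable def localMean (ν : Measure ℝ) (r t : ℝ) : ℝ :=
  ⨍ u in Metric.closedBall t r, u ∂ν

section SetAverage

variable {Ω : Type*} [MeasurableSpace Ω] {μ : Measure Ω} {f : Ω → ℝ} {s t w : Set Ω} {M : ℝ}

lemma setAverage_nonneg_of_ae (hf : 0 ≤ᵐ[μ] f) : 0 ≤ ⨍ a in s, f a ∂μ := by
  rw [setAverage_eq]
  exact smul_nonneg (by positivity) (integral_nonneg_of_ae (ae_restrict_of_ae hf))

lemma setAverage_le_of_forall_le (hs : MeasurableSet s) (hμs : μ s ≠ ⊤) (hf : IntegrableOn f s μ)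
    (hM : 0 ≤ M) (hfM : ∀ a ∈ s, f a ≤ M) : ⨍ a in s, f a ∂μ ≤ M := by
  rcases eq_or_ne (μ s) 0 with h₀ | h₀
  · simpa only [Measure.restrict_eq_zero.2 h₀, average_zero_measure]
  · exact (convex_Iic M).set_average_mem isClosed_Iic h₀ hμs (ae_restrict_of_forall_mem hs hfM) hf

lemma setIntegral_le_mul_measureReal_of_ae_subset (hs : MeasurableSet s) (hsw : s ≤ᵐ[μ] w)
    (hμw : μ w ≠ ⊤) (hf : IntegrableOn f s μ) (hM : 0 ≤ M) (hfM : ∀ a ∈ s, f a ≤ M) :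
    ∫ a in s, f a ∂μ ≤ M * μ.real w := by
  have hle : μ s ≤ μ w := measure_mono_ae hsw
  calc ∫ a in s, f a ∂μ ≤ ∫ _ in s, M ∂μ :=
        setIntegral_mono_on hf (integrableOn_const (hle.trans_lt hμw.lt_top).ne) hs hfM
    _ = M * μ.real s := by rw [setIntegral_const, smul_eq_mul, mul_comm]
    _ ≤ M * μ.real w := mul_le_mul_of_nonneg_left (ENNReal.toReal_mono hμw hle) hM

lemma setAverage_le_setAverage_add_of_subset (hs : MeasurableSet s) (ht : MeasurableSet t)
    (hst : s ⊆ t) (hμs : μ s ≠ 0) (hμt : μ t ≠ ⊤) (hw : (t \ s : Set Ω) ≤ᵐ[μ] w) (hμw : μ w ≠ ⊤)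
    (hf : IntegrableOn f t μ) (hf₀ : 0 ≤ᵐ[μ] f) (hM : 0 ≤ M) (hfM : ∀ a ∈ t \ s, f a ≤ M) :
    ⨍ a in t, f a ∂μ ≤ ⨍ a in s, f a ∂μ + M * (μ.real w / μ.real s) := by
  have hs_pos : 0 < μ.real s := ENNReal.toReal_pos hμs (measure_ne_top_of_subset hst hμt)
  have hs_le : μ.real s ≤ μ.real t := measureReal_mono hst hμt
  have hs_int : 0 ≤ ∫ a in s, f a ∂μ := integral_nonneg_of_ae (ae_restrict_of_ae hf₀)
  have hdiff : ∫ a in t \ s, f a ∂μ ≤ M * μ.real w :=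
    setIntegral_le_mul_measureReal_of_ae_subset (ht.diff hs) hw hμw (hf.mono_set sdiff_subset)
      hM hfM
  rw [setIntegral_sdiff hs hf hst, sub_le_iff_le_add'] at hdiff
  calc ⨍ a in t, f a ∂μ = (∫ a in t, f a ∂μ) / μ.real t := by
        rw [setAverage_eq, smul_eq_mul, div_eq_inv_mul]
    _ ≤ (∫ a in s, f a ∂μ + M * μ.real w) / μ.real s := by gcongr
    _ = ⨍ a in s, f a ∂μ + M * (μ.real w / μ.real s) := by
        rw [setAverage_eq, smul_eq_mul]
        ring

end SetAverage

lemma stronglyMeasurable_setAverage_prodMk {X Y E : Type*} [MeasurableSpace X] [MeasurableSpace Y]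
    [NormedAddCommGroup E] [NormedSpace ℝ E] {ν : Measure Y} [SFinite ν] {S : Set (X × Y)}
    (hS : MeasurableSet S) {f : Y → E} (hf : StronglyMeasurable f) :
    StronglyMeasurable fun a => ⨍ b in Prod.mk a ⁻¹' S, f b ∂ν := by
  have hint : StronglyMeasurable fun a => ∫ b in Prod.mk a ⁻¹' S, f b ∂ν := by
    simp_rw [← integral_indicator (measurable_prodMk_left hS)]
    exact StronglyMeasurable.integral_prod_right (f := fun a b => (Prod.mk a ⁻¹' S).indicator f b)
      ((hf.comp_measurable measurable_snd).indicator hS)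
  simp_rw [setAverage_eq]
  exact (measurable_measure_prodMk_left hS).ennreal_toReal.inv.stronglyMeasurable.smul hint

section LocalMean

variable {ν : Measure ℝ} {r δ : ℝ}

lemma diff_Icc_ae_subset_Ioc {s : Set ℝ} {c : ℝ} (hν : ∀ᵐ u ∂ν, 0 ≤ u)
    (hs : ∀ᵐ u ∂ν, u ∈ s → u ≤ c) : (s \ Icc 0 δ : Set ℝ) ≤ᵐ[ν] Ioc δ c := by
  filter_upwards [hν, hs] with u hu₀ huc hu
  exact ⟨not_le.1 fun huδ => hu.2 ⟨hu₀, huδ⟩, huc hu.1⟩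

lemma measurable_localMean [SFinite ν] : Measurable (localMean ν r) :=
  (stronglyMeasurable_setAverage_prodMk (S := {p : ℝ × ℝ | dist p.2 p.1 ≤ r})
    (measurableSet_le (by fun_prop) measurable_const) stronglyMeasurable_id).measurable

lemma localMean_nonneg (hν : ∀ᵐ u ∂ν, 0 ≤ u) (t : ℝ) : 0 ≤ localMean ν r t :=
  setAverage_nonneg_of_ae hν

variable [IsLocallyFiniteMeasure ν]

lemma ae_localMean_mem_closedBall (hr : 0 < r) :
    ∀ᵐ t ∂ν, localMean ν r t ∈ Metric.closedBall t r := by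
  filter_upwards [Measure.support_mem_ae] with t ht
  have hpos : 0 < ν (Metric.closedBall t r) :=
    (Measure.mem_support_iff_forall t).1 ht _ (Metric.closedBall_mem_nhds t hr)
  exact (convex_closedBall t r).set_average_mem Metric.isClosed_closedBall hpos.ne'
    measure_closedBall_lt_top.ne (ae_restrict_mem Metric.isClosed_closedBall.measurableSet)
    (continuousOn_id.integrableOn_compact (isCompact_closedBall t r))

lemma localMean_le_of_mem_Icc (hν : ∀ᵐ u ∂ν, 0 ≤ u) (hδr : δ ≤ r) (h₀ : ν (Icc 0 δ) ≠ 0) {t : ℝ}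
    (ht : t ∈ Icc 0 δ) :
    localMean ν r t ≤
      ⨍ u in Icc 0 δ, u ∂ν + (r + δ) * (ν.real (Ioc δ (r + δ)) / ν.real (Icc 0 δ)) := by
  have hsub : Icc 0 δ ⊆ Metric.closedBall t r := by
    rw [Real.closedBall_eq_Icc]
    exact Icc_subset_Icc (by linarith [ht.2]) (by linarith [ht.1])
  have hub : ∀ u ∈ Metric.closedBall t r, u ≤ r + δ := fun u hu => by
    rw [Real.closedBall_eq_Icc] at hu
    linarith [hu.2, ht.2]
  exact setAverage_le_setAverage_add_of_subset measurableSet_Icc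
    Metric.isClosed_closedBall.measurableSet hsub h₀ measure_closedBall_lt_top.ne
    (diff_Icc_ae_subset_Ioc hν (ae_of_all _ hub)) measure_Ioc_lt_top.ne
    (continuousOn_id.integrableOn_compact (isCompact_closedBall t r)) hν
    (by linarith [ht.1, ht.2]) fun u hu => hub u hu.1

lemma ae_le_of_localMean_mem_Icc (hr : 0 < r) :
    ∀ᵐ t ∂ν, t ∈ localMean ν r ⁻¹' Icc 0 δ → t ≤ r + δ := by
  filter_upwards [ae_localMean_mem_closedBall hr] with t ht htδ
  rw [Real.closedBall_eq_Icc] at ht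
  linarith [ht.1, htδ.2]

lemma measure_preimage_localMean_ne_top (hν : ∀ᵐ u ∂ν, 0 ≤ u) (hr : 0 < r) :
    ν (localMean ν r ⁻¹' Icc 0 δ) ≠ ⊤ := by
  have hsub : (localMean ν r ⁻¹' Icc 0 δ : Set ℝ) ≤ᵐ[ν] Icc 0 (r + δ) := by
    filter_upwards [hν, ae_le_of_localMean_mem_Icc hr] with t ht₀ ht h
    exact ⟨ht₀, ht h⟩
  exact ((measure_mono_ae hsub).trans_lt measure_Icc_lt_top).ne

lemma integrableOn_localMean_preimage (hν : ∀ᵐ u ∂ν, 0 ≤ u) (hr : 0 < r) :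
    IntegrableOn (localMean ν r) (localMean ν r ⁻¹' Icc 0 δ) ν :=
  Measure.integrableOn_of_bounded (M := δ) (measure_preimage_localMean_ne_top hν hr)
    measurable_localMean.aestronglyMeasurable <|
    ae_restrict_of_forall_mem (measurable_localMean measurableSet_Icc) fun _ ht =>
      abs_le.2 ⟨by linarith [ht.1, ht.2], ht.2⟩

theorem setAverage_localMean_le (hν : ∀ᵐ u ∂ν, 0 ≤ u) (hδ : 0 ≤ δ) (hr : 0 < r) (hδr : δ ≤ r)
    (h₀ : ν (Icc 0 δ) ≠ 0) :
    ⨍ t in localMean ν r ⁻¹' Icc 0 δ, localMean ν r t ∂ν ≤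
      ⨍ u in Icc 0 δ, u ∂ν + (r + 2 * δ) * (ν.real (Ioc δ (r + δ)) / ν.real (Icc 0 δ)) := by
  set q := ν.real (Ioc δ (r + δ)) / ν.real (Icc 0 δ)
  set K := ⨍ u in Icc 0 δ, u ∂ν + (r + δ) * q
  have hKq : ⨍ u in Icc 0 δ, u ∂ν + (r + 2 * δ) * q = K + δ * q := by ring
  have hδq : 0 ≤ δ * q := by positivity
  have hmeas : MeasurableSet (localMean ν r ⁻¹' Icc 0 δ) := measurable_localMean measurableSet_Icc
  have hfin : ν (localMean ν r ⁻¹' Icc 0 δ) ≠ ⊤ := measure_preimage_localMean_ne_top hν hr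
  have hint := integrableOn_localMean_preimage (δ := δ) hν hr
  have hleK : ∀ t ∈ Icc 0 δ, localMean ν r t ≤ K := fun t =>
    localMean_le_of_mem_Icc hν hδr h₀
  rw [hKq]
  rcases le_total δ K with hδK | hKδ
  · calc ⨍ t in localMean ν r ⁻¹' Icc 0 δ, localMean ν r t ∂ν ≤ δ :=
          setAverage_le_of_forall_le hmeas hfin hint hδ fun _ ht => ht.2
      _ ≤ K + δ * q := by linarith
  · have hsub : Icc 0 δ ⊆ localMean ν r ⁻¹' Icc 0 δ := fun t ht =>
      ⟨localMean_nonneg hν t, (hleK t ht).trans hKδ⟩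
    have hK : 0 ≤ K := add_nonneg (setAverage_nonneg_of_ae hν) (by positivity)
    calc ⨍ t in localMean ν r ⁻¹' Icc 0 δ, localMean ν r t ∂ν
        ≤ ⨍ t in Icc 0 δ, localMean ν r t ∂ν + δ * q :=
          setAverage_le_setAverage_add_of_subset measurableSet_Icc hmeas hsub h₀ hfin
            (diff_Icc_ae_subset_Ioc hν (ae_le_of_localMean_mem_Icc hr))
            measure_Ioc_lt_top.ne hint (ae_of_all _ (localMean_nonneg hν)) hδ fun _ ht => ht.1.2
      _ ≤ K + δ * q := by
          gcongr
          exact setAverage_le_of_forall_le measurableSet_Icc measure_Icc_lt_top.ne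
            (hint.mono_set hsub) hK hleK

end LocalMean

section OpinionLaw

variable {x : ℝ → ℝ}

instance : IsFiniteMeasure (opinionLaw x) :=
  inferInstanceAs (IsFiniteMeasure ((volume.restrict (Icc 0 1)).map x))

variable (hx : AEMeasurable x (volume.restrict (Icc 0 1)))
include hx

lemma opinionLaw_apply {s : Set ℝ} (hs : MeasurableSet s) :
    opinionLaw x s = volume {α ∈ Icc (0 : ℝ) 1 | x α ∈ s} := by
  rw [opinionLaw, Measure.map_apply_of_aemeasurable hx hs,
    Measure.restrict_apply' measurableSet_Icc, inter_comm]
  rfl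

lemma setAverage_opinionLaw {s : Set ℝ} (hs : MeasurableSet s) {g : ℝ → ℝ} (hg : Measurable g) :
    ⨍ u in s, g u ∂opinionLaw x =
      (∫ α in {α ∈ Icc (0 : ℝ) 1 | x α ∈ s}, g (x α)) /
        (volume {α ∈ Icc (0 : ℝ) 1 | x α ∈ s}).toReal := by
  rw [setAverage_eq, smul_eq_mul, ← div_eq_inv_mul, measureReal_def, opinionLaw_apply hx hs,
    opinionLaw, setIntegral_map hs hg.aestronglyMeasurable hx,
    Measure.restrict_restrict' measurableSet_Icc, inter_comm]
  rfl

lemma hkT_eq_localMean_opinionLaw (α : ℝ) : hkT x α = localMean (opinionLaw x) 1 (x α) :=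
  (setAverage_opinionLaw hx Metric.isClosed_closedBall.measurableSet measurable_id).symm

end OpinionLaw

theorem hk_mean_increase_general {δ b : ℝ} (hδ₀ : 0 ≤ δ) (hδ₁ : δ ≤ 1) (hb : 1 + δ ≤ b)
    {x : ℝ → ℝ} (hx : AEMeasurable x (volume.restrict (Icc 0 1)))
    (hnonneg : ∀ᵐ α ∂volume.restrict (Icc (0 : ℝ) 1), 0 ≤ x α)
    {A : Set ℝ} (hA : A ⊆ {α ∈ Icc (0 : ℝ) 1 | x α ∈ Icc 0 δ}) (hA₀ : volume A ≠ 0) :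
    (∫ α in {α ∈ Icc (0 : ℝ) 1 | hkT x α ∈ Icc 0 δ}, hkT x α) /
          (volume {α ∈ Icc (0 : ℝ) 1 | hkT x α ∈ Icc 0 δ}).toReal -
        (∫ α in {α ∈ Icc (0 : ℝ) 1 | x α ∈ Icc 0 δ}, x α) /
          (volume {α ∈ Icc (0 : ℝ) 1 | x α ∈ Icc 0 δ}).toReal ≤
      (1 + 2 * δ) * (volume {α ∈ Icc (0 : ℝ) 1 | x α ∈ Icc δ b}).toReal / (volume A).toReal := by
  set ν := opinionLaw x
  have hν : ∀ᵐ u ∂ν, 0 ≤ u := (ae_map_iff hx measurableSet_Ici).2 hnonneg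
  have hx_avg : ⨍ u in Icc 0 δ, u ∂ν = (∫ α in {α ∈ Icc (0 : ℝ) 1 | x α ∈ Icc 0 δ}, x α) /
      (volume {α ∈ Icc (0 : ℝ) 1 | x α ∈ Icc 0 δ}).toReal :=
    setAverage_opinionLaw hx measurableSet_Icc measurable_id
  have hy_avg : ⨍ t in localMean ν 1 ⁻¹' Icc 0 δ, localMean ν 1 t ∂ν =
      (∫ α in {α ∈ Icc (0 : ℝ) 1 | hkT x α ∈ Icc 0 δ}, hkT x α) /
        (volume {α ∈ Icc (0 : ℝ) 1 | hkT x α ∈ Icc 0 δ}).toReal := by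
    simp only [hkT_eq_localMean_opinionLaw hx]
    exact setAverage_opinionLaw hx (measurable_localMean measurableSet_Icc) measurable_localMean
  have hA_le : volume A ≤ ν (Icc 0 δ) :=
    (measure_mono hA).trans_eq (opinionLaw_apply hx measurableSet_Icc).symm
  have hA_pos : 0 < (volume A).toReal :=
    ENNReal.toReal_pos hA₀ (ne_top_of_le_ne_top measure_Icc_lt_top.ne hA_le)
  rw [← hx_avg, ← hy_avg, ← opinionLaw_apply hx measurableSet_Icc, sub_le_iff_le_add',
    mul_div_assoc]
  refine (setAverage_localMean_le hν hδ₀ one_pos hδ₁ (ne_bot_of_le_ne_bot hA₀ hA_le)).trans ?_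
  gcongr
  · exact measureReal_mono (Ioc_subset_Icc_self.trans (Icc_subset_Icc_right hb))
  · exact ENNReal.toReal_mono measure_Icc_lt_top.ne hA_le

/-- Lemma 2 of the paper: the increase of the mean opinion over `A_t` is at most
linear in `μ(B_t)`: `Ā_{t+1} − Ā_t ≤ 4 μ(B_t)/μ(A)`. -/
theorem hk_mean_increase
    -- the confidence/width parameter ε and the fixed constant d = 3/2
    (ε d : ℝ) (hε : 0 < ε) (hε' : ε ≤ 1/10) (hd : d = 3/2)
    -- partition of [0,1] into consecutive closed intervals A, B, C, D, E
    (a₁ a₂ a₃ a₄ : ℝ)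
    (h₀₁ : 0 ≤ a₁) (h₁₂ : a₁ ≤ a₂) (h₂₃ : a₂ ≤ a₃) (h₃₄ : a₃ ≤ a₄) (h₄₅ : a₄ ≤ 1)
    (A B C D E : Set ℝ)
    (hA : A = Icc 0 a₁) (hB : B = Icc a₁ a₂) (hC : C = Icc a₂ a₃)
    (hD : D = Icc a₃ a₄) (hE : E = Icc a₄ 1)
    -- |B| = |D| = ε²|C|, |C| = ε²|A| = ε²|E| (symmetric about 1/2)
    (hlenB : a₂ - a₁ = ε^2 * (a₃ - a₂))
    (hlenD : a₄ - a₃ = ε^2 * (a₃ - a₂))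
    (hlenC : a₃ - a₂ = ε^2 * a₁)
    (hlenE : 1 - a₄ = a₁)
    -- the opinion function x : regular, nonnegative, anti-symmetric about 1/2
    (x : ℝ → ℝ) (hreg : Regular x)
    (hnonneg : ∀ α ∈ Icc (0:ℝ) 1, 0 ≤ x α)
    (hsym : ∀ s ∈ Icc (0:ℝ) (1/2), x (1/2 + s) + x (1/2 - s) = 2 * x (1/2))
    (hmid : x (1/2) = d + 3*ε/2)
    -- the sets A_x = x⁻¹([0,2ε]), B_x = x⁻¹([2ε, d+ε]) and the mean Ā on A_x
    (Ax Bx : Set ℝ) (Abar : ℝ)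
    (hAx : Ax = {α ∈ Icc (0:ℝ) 1 | x α ∈ Icc 0 (2*ε)})
    (hBx : Bx = {α ∈ Icc (0:ℝ) 1 | x α ∈ Icc (2*ε) (d + ε)})
    (hAbar : Abar = (∫ α in Ax, x α) / (volume Ax).toReal)
    -- derivative bounds e, s > 0
    (e s : ℝ) (he : 0 < e) (hs : 0 < s)
    -- Assumptions (I)–(VI)
    (hI : A ⊆ Ax)
    (hII : Bx ⊆ B)
    (hIII : x '' A ⊆ Icc 0 ε)
    (hIV : ∀ α ∈ A, DifferentiableAt ℝ x α → deriv x α ≤ e)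
    (hV : ∀ α ∈ Bx, DifferentiableAt ℝ x α → s ≤ deriv x α)
    (hVI : ε - Abar > 2*ε^2)
    -- the updated opinion function y = Tx
    (y : ℝ → ℝ) (hy : y = hkT x)
    (Ay : Set ℝ)
    (hAy : Ay = {α ∈ Icc (0:ℝ) 1 | y α ∈ Icc 0 (2*ε)}) :
    (∫ α in Ay, y α) / (volume Ay).toReal - Abar
      ≤ 4 * (volume Bx).toReal / (volume A).toReal := by
  subst hy hAx hBx hAbar hAy
  have ha₁ : 0 < a₁ := h₀₁.lt_of_ne' fun h => by
    have hC₀ : a₃ - a₂ = 0 := by rw [hlenC, h, mul_zero]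
    rw [hC₀, mul_zero] at hlenB hlenD
    linarith
  have hA₀ : volume A ≠ 0 := by simpa [hA] using ha₁
  exact (hk_mean_increase_general (b := d + ε) (by linarith) (by linarith) (by linarith)
    (hreg.1.aemeasurable measurableSet_Icc) (ae_restrict_of_forall_mem measurableSet_Icc hnonneg)
    hI hA₀).trans (by gcongr; linarith)
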